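/- Fix a > 0, ν > 0, μ > 0 and Heston parameters σ > 0, κ > 0, m > 0, r ≥ 0, ρ ∈ [−1,1], ω > 0. For all test functions u, v on Ω = ℝ × [a,∞) the following integration-by-parts identity holds, where every integral is over Ω against the measure φ(x)²ψ(y)² dx dy: ∫ (L^H u) \overline{v} = (1/2)∫ y u_x \overline{v}_x + ν∫ y sign(x) u_x \overline{v} + (σ²/2)∫ y u_y \overline{v}_y + (σ²/2)∫ u_y \overline{v} + μσ²∫ y² u_y \overline{v} + 2ρσν∫ y sign(x) u_y \overline{v} + ρσ∫ y u_y \overline{v}_x − ∫ (ωρσ y² − (1/2)y + r) u_x \overline{v} − ∫ (ωσ² y² + κ(m − y)) u_y \overline{v} − ∫ [ (1/2) ω σ² y (ω y² + 1) + ω y κ(m − y) − r ] u \overline{v}. -/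

import Mathlib

/-!
The second-order terms of `L^H u` are integrated by parts once: the `u_xx` and `u_xy` terms in
the variable `x`, the `u_yy` term in `y`. The product being differentiated is
`H = y · u_x · conj v · W` for the `u_xx` term and `H = y · u_y · conj v · W` for the two others;
it is continuous and compactly
supported. It fails to be differentiable in `x` only on the line `x = 0`, because of the kink of
`e^{2ν|x|}`; being continuous across that line, it still has derivative of integral zero
(`integral_eq_zero_of_deriv`, then Fubini in `integral_dx_eq_zero` and `integral_dy_eq_zero`).
Since `W_x = 2ν sign(x) W` off that line and `W_y = 2μ y W`, expanding the derivatives by the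
product rule (`ibp_x`, `ibp_y`) produces exactly the first-order terms of the identity; the mixed
term also uses the symmetry `u_xy = u_yx`. The boundary `y = a` contributes nothing because test
functions vanish for `y ≤ a`, so integrals over `Ω` are integrals over the plane.
-/

open MeasureTheory Real

noncomputable section

/-- The domain `Ω = ℝ × [a, ∞)` as a subset of `ℝ²`. -/
def dom (a : ℝ) : Set (ℝ × ℝ) := {p : ℝ × ℝ | a ≤ p.2}

/-- The squared weight `φ(x)² ψ(y)²` where `φ(x) = e^{ν|x|}` and `ψ(y) = e^{(μ/2)y²}`. -/
def W (ν μ : ℝ) (p : ℝ × ℝ) : ℝ :=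
  Real.exp (ν * |p.1|) ^ 2 * Real.exp (μ / 2 * p.2 ^ 2) ^ 2

/-- A test function: smooth, with compact support contained in `ℝ × (a, ∞)`. -/
def IsTest (a : ℝ) (v : ℝ × ℝ → ℂ) : Prop :=
  ContDiff ℝ (⊤ : ℕ∞) v ∧ HasCompactSupport v ∧ tsupport v ⊆ {p : ℝ × ℝ | a < p.2}

/-- Partial derivative in the first (x) variable. -/
def dX (v : ℝ × ℝ → ℂ) (p : ℝ × ℝ) : ℂ := fderiv ℝ v p ((1 : ℝ), (0 : ℝ))

/-- Partial derivative in the second (y) variable. -/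
def dY (v : ℝ × ℝ → ℂ) (p : ℝ × ℝ) : ℂ := fderiv ℝ v p ((0 : ℝ), (1 : ℝ))

/-- Squared weighted L² norm `‖v‖²_{φ,ψ}`. -/
def L2normSq (a ν μ : ℝ) (v : ℝ × ℝ → ℂ) : ℝ :=
  ∫ p in dom a, ‖v p‖ ^ 2 * W ν μ p

/-- Squared weighted V norm
`‖v‖²_{V} = ‖v‖²_{φ,ψ} + ‖√y ∂v/∂x‖²_{φ,ψ} + ‖√y ∂v/∂y‖²_{φ,ψ}`. -/
def VnormSq (a ν μ : ℝ) (v : ℝ × ℝ → ℂ) : ℝ :=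
  L2normSq a ν μ v + (∫ p in dom a, p.2 * ‖dX v p‖ ^ 2 * W ν μ p)
    + ∫ p in dom a, p.2 * ‖dY v p‖ ^ 2 * W ν μ p

/-- The Heston operator `L^H`. -/
def LH (σ κ m r ρ ω : ℝ) (u : ℝ × ℝ → ℂ) (p : ℝ × ℝ) : ℂ :=
  -(1 / 2 : ℂ) * (p.2 : ℂ) * dX (dX u) p
    - ((σ ^ 2 / 2 : ℝ) : ℂ) * (p.2 : ℂ) * dY (dY u) p
    - ((ρ * σ : ℝ) : ℂ) * (p.2 : ℂ) * dY (dX u) p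
    - ((ω * ρ * σ * p.2 ^ 2 - 1 / 2 * p.2 + r : ℝ) : ℂ) * dX u p
    - ((ω * σ ^ 2 * p.2 ^ 2 + κ * (m - p.2) : ℝ) : ℂ) * dY u p
    - ((1 / 2 * ω * σ ^ 2 * p.2 * (ω * p.2 ^ 2 + 1) + ω * p.2 * κ * (m - p.2) - r : ℝ) : ℂ) * u p

/-- The sesquilinear form `a_H^{φ,ψ}(u,v) = ∫_Ω (L^H u) conj(v) φ²ψ² dx dy`. -/
def formH (a ν μ σ κ m r ρ ω : ℝ) (u v : ℝ × ℝ → ℂ) : ℂ :=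
  ∫ p in dom a, LH σ κ m r ρ ω u p * (starRingEnd ℂ) (v p) * ((W ν μ p : ℝ) : ℂ)

/-! ### Vanishing of integrals of derivatives -/

/-- Differentiability is allowed to fail at the origin, where continuity suffices. -/
lemma integral_eq_zero_of_deriv {f f' : ℝ → ℂ} (hc : Continuous f) (hs : HasCompactSupport f)
    (hd : ∀ x, x ≠ 0 → HasDerivAt f (f' x) x) (hi : Integrable f') : ∫ x, f' x = 0 := by
  have hz := hs.is_zero_at_infty
  have htop : Filter.Tendsto f Filter.atTop (nhds 0) := hz.mono_left atTop_le_cocompact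
  have hbot : Filter.Tendsto f Filter.atBot (nhds 0) := hz.mono_left atBot_le_cocompact
  have h1 := integral_Ioi_of_hasDerivAt_of_tendsto (a := 0) hc.continuousWithinAt
    (fun x hx => hd x (ne_of_gt hx)) hi.integrableOn htop
  have h2 := integral_Iic_of_hasDerivAt_of_tendsto (a := 0) hc.continuousWithinAt
    (fun x hx => hd x (ne_of_lt hx)) hi.integrableOn hbot
  rw [← intervalIntegral.integral_Iic_add_Ioi (b := 0) hi.integrableOn hi.integrableOn, h1, h2]
  ring

lemma integral_dx_eq_zero {H H' : ℝ × ℝ → ℂ} (hc : Continuous H) (hs : HasCompactSupport H)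
    (hd : ∀ p : ℝ × ℝ, p.1 ≠ 0 → HasDerivAt (fun x => H (x, p.2)) (H' p) p.1)
    (hi : Integrable H') : ∫ p, H' p = 0 := by
  rw [Measure.volume_eq_prod] at hi ⊢
  rw [integral_prod_symm _ hi]
  refine integral_eq_zero_of_ae ?_
  filter_upwards [hi.prod_left_ae] with y hy
  exact integral_eq_zero_of_deriv (f := fun x => H (x, y)) (by fun_prop)
    (hs.comp_isClosedEmbedding
      (Isometry.of_dist_eq fun x x' => by simp [Prod.dist_eq]).isClosedEmbedding)
    (fun x hx => hd (x, y) hx) hy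

lemma integral_dy_eq_zero {H H' : ℝ × ℝ → ℂ} (hc : Continuous H) (hs : HasCompactSupport H)
    (hd : ∀ p : ℝ × ℝ, HasDerivAt (fun y => H (p.1, y)) (H' p) p.2)
    (hi : Integrable H') : ∫ p, H' p = 0 := by
  rw [Measure.volume_eq_prod] at hi ⊢
  rw [integral_prod _ hi]
  refine integral_eq_zero_of_ae ?_
  filter_upwards [hi.prod_right_ae] with x hx
  exact integral_eq_zero_of_deriv (f := fun y => H (x, y)) (by fun_prop)
    (hs.comp_isClosedEmbedding
      (Isometry.of_dist_eq fun y y' => by simp [Prod.dist_eq]).isClosedEmbedding)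
    (fun y _ => hd (x, y)) hx

/-! ### The weight -/

lemma continuous_W (ν μ : ℝ) : Continuous (W ν μ) := by
  unfold W; fun_prop

lemma hasDerivAt_W_x (ν μ : ℝ) {x : ℝ} (y : ℝ) (hx : x ≠ 0) :
    HasDerivAt (fun x => W ν μ (x, y)) (2 * ν * Real.sign x * W ν μ (x, y)) x := by
  have habs : HasDerivAt (fun x : ℝ => |x|) (Real.sign x) x := by
    rcases lt_or_gt_of_ne hx with h | h
    · rw [Real.sign_of_neg h]; exact hasDerivAt_abs_neg h
    · rw [Real.sign_of_pos h]; exact hasDerivAt_abs_pos h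
  have h := (((habs.const_mul ν).exp).pow 2).mul_const (Real.exp (μ / 2 * y ^ 2) ^ 2)
  refine h.congr_deriv ?_
  simp only [W]
  ring

lemma hasDerivAt_W_y (ν μ x y : ℝ) :
    HasDerivAt (fun y => W ν μ (x, y)) (2 * μ * y * W ν μ (x, y)) y := by
  have h := (((((hasDerivAt_id y).pow 2).const_mul (μ / 2)).exp).pow 2).const_mul
    (Real.exp (ν * |x|) ^ 2)
  refine h.congr_deriv ?_
  simp [W]
  ring

/-! ### Test functions and their partial derivatives -/

lemma contDiff_dX {u : ℝ × ℝ → ℂ} (hu : ContDiff ℝ (⊤ : ℕ∞) u) :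
    ContDiff ℝ (⊤ : ℕ∞) (dX u) :=
  (hu.fderiv_right (by simp)).clm_apply contDiff_const

lemma contDiff_dY {u : ℝ × ℝ → ℂ} (hu : ContDiff ℝ (⊤ : ℕ∞) u) :
    ContDiff ℝ (⊤ : ℕ∞) (dY u) :=
  (hu.fderiv_right (by simp)).clm_apply contDiff_const

lemma hasDerivAt_dX {u : ℝ × ℝ → ℂ} (hu : ContDiff ℝ (⊤ : ℕ∞) u) (p : ℝ × ℝ) :
    HasDerivAt (fun x => u (x, p.2)) (dX u p) p.1 := by
  have h : HasFDerivAt u (fderiv ℝ u (p.1, p.2)) (p.1, p.2) :=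
    (hu.differentiable (by simp) _).hasFDerivAt
  exact h.comp_hasDerivAt p.1 ((hasDerivAt_id p.1).prodMk (hasDerivAt_const p.1 p.2))

lemma hasDerivAt_dY {u : ℝ × ℝ → ℂ} (hu : ContDiff ℝ (⊤ : ℕ∞) u) (p : ℝ × ℝ) :
    HasDerivAt (fun y => u (p.1, y)) (dY u p) p.2 := by
  have h : HasFDerivAt u (fderiv ℝ u (p.1, p.2)) (p.1, p.2) :=
    (hu.differentiable (by simp) _).hasFDerivAt
  exact h.comp_hasDerivAt p.2 ((hasDerivAt_const p.2 p.1).prodMk (hasDerivAt_id p.2))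

lemma dY_dX_eq_dX_dY {u : ℝ × ℝ → ℂ} (hu : ContDiff ℝ (⊤ : ℕ∞) u) (p : ℝ × ℝ) :
    dY (dX u) p = dX (dY u) p := by
  have hsymm : IsSymmSndFDerivAt ℝ u p :=
    hu.contDiffAt.isSymmSndFDerivAt (by
      rw [minSmoothness_of_isRCLikeNormedField]
      exact WithTop.coe_le_coe.2 (le_top (a := (2 : ℕ∞))))
  have hd : DifferentiableAt ℝ (fderiv ℝ u) p :=
    ((hu.fderiv_right (m := (⊤ : ℕ∞)) (by simp)).differentiable (by simp)) p
  have key : ∀ e w : ℝ × ℝ, fderiv ℝ (fun q => fderiv ℝ u q e) p w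
      = fderiv ℝ (fderiv ℝ u) p w e := by
    intro e w
    rw [fderiv_clm_apply hd (differentiableAt_const e)]
    simp
  change fderiv ℝ (fun q => fderiv ℝ u q (1, 0)) p (0, 1)
    = fderiv ℝ (fun q => fderiv ℝ u q (0, 1)) p (1, 0)
  rw [key, key]
  exact hsymm _ _

lemma IsTest.dX {a : ℝ} {v : ℝ × ℝ → ℂ} (hv : IsTest a v) : IsTest a (dX v) :=
  ⟨contDiff_dX hv.1, hv.2.1.fderiv_apply ℝ (1, 0),
    (tsupport_fderiv_apply_subset ℝ (1, 0)).trans hv.2.2⟩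

lemma IsTest.dY {a : ℝ} {v : ℝ × ℝ → ℂ} (hv : IsTest a v) : IsTest a (dY v) :=
  ⟨contDiff_dY hv.1, hv.2.1.fderiv_apply ℝ (0, 1),
    (tsupport_fderiv_apply_subset ℝ (0, 1)).trans hv.2.2⟩

lemma IsTest.eq_zero {a : ℝ} {v : ℝ × ℝ → ℂ} (hv : IsTest a v) {p : ℝ × ℝ} (hp : p ∉ dom a) :
    v p = 0 := by
  by_contra h
  have hlt : a < p.2 := hv.2.2 (subset_tsupport v h)
  exact hp hlt.le

/-! ### Integrability -/

lemma IsTest.hasCompactSupport_mul {a : ℝ} {v : ℝ × ℝ → ℂ} (hv : IsTest a v) (ν μ : ℝ)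
    (g : ℝ × ℝ → ℂ) :
    HasCompactSupport (fun p => g p * (starRingEnd ℂ) (v p) * ((W ν μ p : ℝ) : ℂ)) := by
  have h : HasCompactSupport (fun p => (starRingEnd ℂ) (v p)) :=
    hv.2.1.comp_left (g := starRingEnd ℂ) (map_zero _)
  exact (h.mul_left (f := g)).mul_right

lemma IsTest.continuous_mul {a : ℝ} {v : ℝ × ℝ → ℂ} (hv : IsTest a v) (ν μ : ℝ)
    {g : ℝ × ℝ → ℂ} (hg : Continuous g) :
    Continuous (fun p => g p * (starRingEnd ℂ) (v p) * ((W ν μ p : ℝ) : ℂ)) :=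
  (hg.mul (Complex.continuous_conj.comp hv.1.continuous)).mul
    (Complex.continuous_ofReal.comp (continuous_W ν μ))

lemma IsTest.integrable {a : ℝ} {v : ℝ × ℝ → ℂ} (hv : IsTest a v) (ν μ : ℝ)
    {g : ℝ × ℝ → ℂ} (hg : Continuous g) :
    Integrable (fun p => g p * (starRingEnd ℂ) (v p) * ((W ν μ p : ℝ) : ℂ)) :=
  (hv.continuous_mul ν μ hg).integrable_of_hasCompactSupport (hv.hasCompactSupport_mul ν μ g)

lemma measurable_realSign : Measurable Real.sign := by
  unfold Real.sign
  exact Measurable.ite measurableSet_Iio measurable_const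
    (Measurable.ite measurableSet_Ioi measurable_const measurable_const)

lemma IsTest.integrable_sign {a : ℝ} {v : ℝ × ℝ → ℂ} (hv : IsTest a v) (ν μ : ℝ)
    {g : ℝ × ℝ → ℂ} (hg : Continuous g) :
    Integrable (fun p => (p.2 : ℂ) * ((Real.sign p.1 : ℝ) : ℂ) * g p * (starRingEnd ℂ) (v p)
      * ((W ν μ p : ℝ) : ℂ)) := by
  have h := (hv.integrable ν μ (g := fun p => (p.2 : ℂ) * g p) (by fun_prop)).bdd_mul
    (f := fun p : ℝ × ℝ => ((Real.sign p.1 : ℝ) : ℂ)) (c := 1)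
    (Complex.measurable_ofReal.comp
      (measurable_realSign.comp measurable_fst)).aestronglyMeasurable
    (Filter.Eventually.of_forall fun p => by
      rcases Real.sign_apply_eq p.1 with h | h | h <;> simp [h])
  refine h.congr (Filter.Eventually.of_forall fun p => ?_)
  simp only
  ring

/-! ### Integration by parts on the domain -/

/-- Integration by parts in `x`, with `w` in the role of `u_x` or `u_y`. -/
lemma ibp_x {a : ℝ} (ν μ : ℝ) {w v : ℝ × ℝ → ℂ} (hw : ContDiff ℝ (⊤ : ℕ∞) w)
    (hv : IsTest a v) :
    (∫ p in dom a, (p.2 : ℂ) * dX w p * (starRingEnd ℂ) (v p) * ((W ν μ p : ℝ) : ℂ))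
      + (∫ p in dom a, (p.2 : ℂ) * w p * (starRingEnd ℂ) (dX v p) * ((W ν μ p : ℝ) : ℂ))
      + 2 * ν * (∫ p in dom a, (p.2 : ℂ) * ((Real.sign p.1 : ℝ) : ℂ) * w p
          * (starRingEnd ℂ) (v p) * ((W ν μ p : ℝ) : ℂ)) = 0 := by
  have hwc := hw.continuous
  have hwc' := (contDiff_dX hw).continuous
  have i1 := hv.integrable ν μ (g := fun p => (p.2 : ℂ) * dX w p) (by fun_prop)
  have i2 := hv.dX.integrable ν μ (g := fun p => (p.2 : ℂ) * w p) (by fun_prop)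
  have i3 := (hv.integrable_sign ν μ hwc).const_mul (2 * (ν : ℂ))
  rw [setIntegral_eq_integral_of_forall_compl_eq_zero (fun p hp => by simp [hv.eq_zero hp]),
    setIntegral_eq_integral_of_forall_compl_eq_zero (fun p hp => by simp [hv.dX.eq_zero hp]),
    setIntegral_eq_integral_of_forall_compl_eq_zero (fun p hp => by simp [hv.eq_zero hp]),
    ← integral_const_mul, ← integral_add' i1 i2, ← integral_add' (i1.add i2) i3]
  refine integral_dx_eq_zero
    (hv.continuous_mul ν μ (g := fun p => (p.2 : ℂ) * w p) (by fun_prop))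
    (hv.hasCompactSupport_mul ν μ _) (fun p hp => ?_) ((i1.add i2).add i3)
  have h := (((hasDerivAt_dX hw p).const_mul (p.2 : ℂ)).mul
    (hasDerivAt_dX hv.1 p).star).mul (hasDerivAt_W_x ν μ p.2 hp).ofReal_comp
  refine h.congr_deriv ?_
  simp
  ring

/-- Integration by parts in `y`, with `w` in the role of `u_y`. -/
lemma ibp_y {a : ℝ} (ν μ : ℝ) {w v : ℝ × ℝ → ℂ} (hw : ContDiff ℝ (⊤ : ℕ∞) w)
    (hv : IsTest a v) :
    (∫ p in dom a, (p.2 : ℂ) * dY w p * (starRingEnd ℂ) (v p) * ((W ν μ p : ℝ) : ℂ))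
      + (∫ p in dom a, (p.2 : ℂ) * w p * (starRingEnd ℂ) (dY v p) * ((W ν μ p : ℝ) : ℂ))
      + (∫ p in dom a, w p * (starRingEnd ℂ) (v p) * ((W ν μ p : ℝ) : ℂ))
      + 2 * μ * (∫ p in dom a, ((p.2 ^ 2 : ℝ) : ℂ) * w p
          * (starRingEnd ℂ) (v p) * ((W ν μ p : ℝ) : ℂ)) = 0 := by
  have hwc := hw.continuous
  have hwc' := (contDiff_dY hw).continuous
  have i1 := hv.integrable ν μ (g := fun p => (p.2 : ℂ) * dY w p) (by fun_prop)
  have i2 := hv.dY.integrable ν μ (g := fun p => (p.2 : ℂ) * w p) (by fun_prop)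
  have i3 := hv.integrable ν μ hwc
  have i4 := (hv.integrable ν μ (g := fun p => ((p.2 ^ 2 : ℝ) : ℂ) * w p)
    (by fun_prop)).const_mul (2 * (μ : ℂ))
  rw [setIntegral_eq_integral_of_forall_compl_eq_zero (fun p hp => by simp [hv.eq_zero hp]),
    setIntegral_eq_integral_of_forall_compl_eq_zero (fun p hp => by simp [hv.dY.eq_zero hp]),
    setIntegral_eq_integral_of_forall_compl_eq_zero (fun p hp => by simp [hv.eq_zero hp]),
    setIntegral_eq_integral_of_forall_compl_eq_zero (fun p hp => by simp [hv.eq_zero hp]),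
    ← integral_const_mul, ← integral_add' i1 i2, ← integral_add' (i1.add i2) i3,
    ← integral_add' ((i1.add i2).add i3) i4]
  refine integral_dy_eq_zero
    (hv.continuous_mul ν μ (g := fun p => (p.2 : ℂ) * w p) (by fun_prop))
    (hv.hasCompactSupport_mul ν μ _) (fun p => ?_) (((i1.add i2).add i3).add i4)
  have h := (((hasDerivAt_id p.2).ofReal_comp.mul (hasDerivAt_dY hw p)).mul
    (hasDerivAt_dY hv.1 p).star).mul (hasDerivAt_W_y ν μ p.1 p.2).ofReal_comp
  refine h.congr_deriv ?_
  simp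
  ring

/-! ### The identity -/

/-- integration by parts identity for the Heston form. -/
theorem stmt_2 (a ν μ σ κ m r ρ ω : ℝ) (ha : 0 < a) (hν : 0 < ν) (hμ : 0 < μ)
    (hσ : 0 < σ) (hκ : 0 < κ) (hm : 0 < m) (hr : 0 ≤ r)
    (hρ : ρ ∈ Set.Icc (-1 : ℝ) 1) (hω : 0 < ω)
    (u v : ℝ × ℝ → ℂ) (hu : IsTest a u) (hv : IsTest a v) :
    formH a ν μ σ κ m r ρ ω u v =
      (1 / 2 : ℂ) * (∫ p in dom a,
          (p.2 : ℂ) * dX u p * (starRingEnd ℂ) (dX v p) * ((W ν μ p : ℝ) : ℂ))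
      + (ν : ℂ) * (∫ p in dom a,
          (p.2 : ℂ) * ((Real.sign p.1 : ℝ) : ℂ) * dX u p * (starRingEnd ℂ) (v p)
            * ((W ν μ p : ℝ) : ℂ))
      + ((σ ^ 2 / 2 : ℝ) : ℂ) * (∫ p in dom a,
          (p.2 : ℂ) * dY u p * (starRingEnd ℂ) (dY v p) * ((W ν μ p : ℝ) : ℂ))
      + ((σ ^ 2 / 2 : ℝ) : ℂ) * (∫ p in dom a,
          dY u p * (starRingEnd ℂ) (v p) * ((W ν μ p : ℝ) : ℂ))
      + ((μ * σ ^ 2 : ℝ) : ℂ) * (∫ p in dom a,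
          ((p.2 ^ 2 : ℝ) : ℂ) * dY u p * (starRingEnd ℂ) (v p) * ((W ν μ p : ℝ) : ℂ))
      + ((2 * ρ * σ * ν : ℝ) : ℂ) * (∫ p in dom a,
          (p.2 : ℂ) * ((Real.sign p.1 : ℝ) : ℂ) * dY u p * (starRingEnd ℂ) (v p)
            * ((W ν μ p : ℝ) : ℂ))
      + ((ρ * σ : ℝ) : ℂ) * (∫ p in dom a,
          (p.2 : ℂ) * dY u p * (starRingEnd ℂ) (dX v p) * ((W ν μ p : ℝ) : ℂ))
      - (∫ p in dom a,
          ((ω * ρ * σ * p.2 ^ 2 - 1 / 2 * p.2 + r : ℝ) : ℂ) * dX u p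
            * (starRingEnd ℂ) (v p) * ((W ν μ p : ℝ) : ℂ))
      - (∫ p in dom a,
          ((ω * σ ^ 2 * p.2 ^ 2 + κ * (m - p.2) : ℝ) : ℂ) * dY u p
            * (starRingEnd ℂ) (v p) * ((W ν μ p : ℝ) : ℂ))
      - (∫ p in dom a,
          ((1 / 2 * ω * σ ^ 2 * p.2 * (ω * p.2 ^ 2 + 1) + ω * p.2 * κ * (m - p.2) - r : ℝ) : ℂ)
            * u p * (starRingEnd ℂ) (v p) * ((W ν μ p : ℝ) : ℂ)) := by
  have cX := (contDiff_dX hu.1).continuous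
  have cY := (contDiff_dY hu.1).continuous
  have cXX := (contDiff_dX (contDiff_dX hu.1)).continuous
  have cXY := (contDiff_dX (contDiff_dY hu.1)).continuous
  have cYY := (contDiff_dY (contDiff_dY hu.1)).continuous
  have cu := hu.1.continuous
  have hA := ibp_x ν μ (contDiff_dX hu.1) hv
  have hB := ibp_y ν μ (contDiff_dY hu.1) hv
  have hC := ibp_x ν μ (contDiff_dY hu.1) hv
  -- `formH` splits into six integrals: three of second order, three kept unchanged.
  have iA := ((hv.integrable ν μ (g := fun p => (p.2 : ℂ) * dX (dX u) p)
    (by fun_prop)).integrableOn (s := dom a)).const_mul (-(1 / 2 : ℂ))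
  have iB := ((hv.integrable ν μ (g := fun p => (p.2 : ℂ) * dY (dY u) p)
    (by fun_prop)).integrableOn (s := dom a)).const_mul ((σ ^ 2 / 2 : ℝ) : ℂ)
  have iC := ((hv.integrable ν μ (g := fun p => (p.2 : ℂ) * dX (dY u) p)
    (by fun_prop)).integrableOn (s := dom a)).const_mul ((ρ * σ : ℝ) : ℂ)
  have i1 := (hv.integrable ν μ
    (g := fun p => ((ω * ρ * σ * p.2 ^ 2 - 1 / 2 * p.2 + r : ℝ) : ℂ) * dX u p)
    (by fun_prop)).integrableOn (s := dom a)
  have i2 := (hv.integrable ν μ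
    (g := fun p => ((ω * σ ^ 2 * p.2 ^ 2 + κ * (m - p.2) : ℝ) : ℂ) * dY u p)
    (by fun_prop)).integrableOn (s := dom a)
  have i3 := (hv.integrable ν μ
    (g := fun p => ((1 / 2 * ω * σ ^ 2 * p.2 * (ω * p.2 ^ 2 + 1) + ω * p.2 * κ * (m - p.2) - r
      : ℝ) : ℂ) * u p) (by fun_prop)).integrableOn (s := dom a)
  have hF : formH a ν μ σ κ m r ρ ω u v = _ :=
    ((integral_congr_ae (Filter.Eventually.of_forall fun p => by
      simp only [LH, dY_dX_eq_dX_dY hu.1, Pi.sub_apply]; ring)).trans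
      (integral_sub ((((iA.sub iB).sub iC).sub i1).sub i2) i3))
  rw [integral_sub' (((iA.sub iB).sub iC).sub i1) i2, integral_sub' ((iA.sub iB).sub iC) i1,
    integral_sub' (iA.sub iB) iC, integral_sub' iA iB, integral_const_mul, integral_const_mul,
    integral_const_mul] at hF
  rw [hF]
  push_cast at hA hB hC ⊢
  linear_combination (-(1 / 2 : ℂ)) * hA - ((σ : ℂ) ^ 2 / 2) * hB - ((ρ : ℂ) * σ) * hC
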